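/- Let n ≥ 2. For ε = (ε_1, …, ε_n) ∈ {0,1}^n set m_ε := 2(ε_1 + ⋯ + ε_{n−1}) + 2^{n+1} ε_n. Let φ' : {0,1}^{n−1} → {0, …, 2^{n−1}−1} be any bijection such that φ'(ε) ≤ φ'(δ) whenever ε_1 + ⋯ + ε_{n−1} ≤ δ_1 + ⋯ + δ_{n−1}, and for 0 ≤ i ≤ 2^n − 1 define m_i := m_ε for the unique ε ∈ {0,1}^n with φ'(ε_1,…,ε_{n−1}) + 2^{n−1} ε_n = i. Then: (a) ∑_{i=0}^{2^n−1} m_i = 2^n (2^n + n − 1); in particular, if r = 2^n − 2 then ∑_{i=0}^{r+1} m_i = (r+2)(n+r+1); and (b) for every integer r with 2^{n−1} ≤ r + 1 < 2^n, one has ∑_{i=0}^{r+1} m_i ≤ 2(r+2)(n+r). -/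

import Mathlib

/-!
Write `n = k + 1` and let `i < 2 ^ n` be the index of `(ε, b)`. For (a), sum `m_i` over the pairs
`(ε, b)`; complementing `ε` shows that the average weight is `k / 2`. For (b), the degrees are
dominated termwise by an arithmetic progression: `m_i ≤ 2 k + 4 i`, because `2 |ε| ≤ 2 k`, and
`2 ^ (n + 1) = 4 * 2 ^ k ≤ 4 i` when `b = 1`. The sum of its first `r + 2` terms is
`2 (r + 2) (k + r + 1)`.
-/

/-- The number of `true` entries (the "length" `|ε|`) of a tuple `ε ∈ {0,1}^m`. -/
def boolWeight {m : ℕ} (ε : Fin m → Bool) : ℕ :=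
  (Finset.univ.filter fun i => ε i = true).card

theorem boolWeight_add_boolWeight_not {k : ℕ} (ε : Fin k → Bool) :
    boolWeight ε + boolWeight (fun i => !ε i) = k := by
  simpa [boolWeight] using
    Finset.card_filter_add_card_filter_not (s := (Finset.univ : Finset (Fin k))) (ε · = true)

theorem boolWeight_le {k : ℕ} (ε : Fin k → Bool) : boolWeight ε ≤ k :=
  Nat.le.intro (boolWeight_add_boolWeight_not ε)

theorem two_mul_sum_boolWeight (k : ℕ) :
    2 * ∑ ε : Fin k → Bool, boolWeight ε = k * 2 ^ k := by
  have sum_not :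
      ∑ ε : Fin k → Bool, boolWeight (fun i => !ε i) = ∑ ε : Fin k → Bool, boolWeight ε :=
    Equiv.sum_comp (Equiv.piCongrRight fun _ => Equiv.boolNot) boolWeight
  calc 2 * ∑ ε : Fin k → Bool, boolWeight ε
      = ∑ ε : Fin k → Bool, (boolWeight ε + boolWeight (fun i => !ε i)) := by
        rw [Finset.sum_add_distrib, sum_not, two_mul]
    _ = k * 2 ^ k := by simp [boolWeight_add_boolWeight_not, mul_comm]

/-- The degree `m_ε` of the polynomial `c_ε`, where `ε ∈ {0,1}^(k+1)` is encoded as the pair of its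
first `k` coordinates and its last one. -/
def ctoDegree {k : ℕ} (x : (Fin k → Bool) × Bool) : ℕ :=
  2 * boolWeight x.1 + 2 ^ (k + 2) * (if x.2 then 1 else 0)

theorem sum_ctoDegree (k : ℕ) :
    ∑ x : (Fin k → Bool) × Bool, ctoDegree x = 2 ^ (k + 1) * (2 ^ (k + 1) + k) := by
  calc ∑ x : (Fin k → Bool) × Bool, ctoDegree x
      = ∑ ε : Fin k → Bool, (2 * (2 * boolWeight ε) + 2 ^ (k + 2)) := by
        rw [Fintype.sum_prod_type]
        refine Finset.sum_congr rfl fun ε _ => ?_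
        simp only [ctoDegree, Fintype.sum_bool, if_true, Bool.false_eq_true, if_false]
        ring
    _ = 2 * (2 * ∑ ε : Fin k → Bool, boolWeight ε) + 2 ^ k * 2 ^ (k + 2) := by
        simp [Finset.sum_add_distrib, Finset.mul_sum]
    _ = 2 ^ (k + 1) * (2 ^ (k + 1) + k) := by
        rw [two_mul_sum_boolWeight]
        ring

/-- The enumeration `(a, b) ↦ φ a + N b` of `α × {0,1}` induced by an enumeration `φ` of `α`. For
`φ = φ'` this is the bijection `{0,1}ⁿ ≃ {0, …, 2ⁿ - 1}` by which the `m_ε` are numbered. -/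
def doubleEnumeration {α : Type*} {N : ℕ} (φ : α ≃ Fin N) : α × Bool ≃ Fin (2 * N) :=
  (Equiv.prodComm α Bool).trans ((finTwoEquiv.symm.prodCongr φ).trans finProdFinEquiv)

theorem val_doubleEnumeration {α : Type*} {N : ℕ} (φ : α ≃ Fin N) (x : α × Bool) :
    (doubleEnumeration φ x : ℕ) = φ x.1 + N * (if x.2 then 1 else 0) := by
  rcases x with ⟨a, _ | _⟩ <;> simp [doubleEnumeration, finTwoEquiv]

theorem ctoDegree_le_doubleEnumeration {k : ℕ} (φ : (Fin k → Bool) ≃ Fin (2 ^ k))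
    (x : (Fin k → Bool) × Bool) :
    ctoDegree x ≤ 2 * k + 4 * (doubleEnumeration φ x : ℕ) := by
  calc ctoDegree x = 2 * boolWeight x.1 + 4 * (2 ^ k * (if x.2 then 1 else 0)) := by
        rw [ctoDegree]
        ring
    _ ≤ 2 * k + 4 * (doubleEnumeration φ x : ℕ) := by
        rw [val_doubleEnumeration]
        gcongr
        · exact boolWeight_le x.1
        · exact Nat.le_add_left _ _

theorem sum_range_succ_two_mul_add_two_mul {R : Type*} [CommSemiring R] (a d : R) (p : ℕ) :
    ∑ i ∈ Finset.range (p + 1), (2 * a + 2 * d * i) = (p + 1) * (2 * a + d * p) := by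
  induction p with
  | zero => simp
  | succ p ih =>
    rw [Finset.sum_range_succ, ih]
    push_cast
    ring

section Enumeration

variable {k : ℕ} (φ : (Fin k → Bool) ≃ Fin (2 ^ k)) {m : ℕ → ℕ}
  (hm : ∀ x, m (doubleEnumeration φ x) = ctoDegree x)

include hm

theorem sum_range_degrees :
    ∑ i ∈ Finset.range (2 ^ (k + 1)), m i = 2 ^ (k + 1) * (2 ^ (k + 1) + k) := by
  calc ∑ i ∈ Finset.range (2 ^ (k + 1)), m i = ∑ i : Fin (2 * 2 ^ k), m i := by
        rw [pow_succ', Finset.sum_range]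
    _ = ∑ x, m (doubleEnumeration φ x) :=
        ((doubleEnumeration φ).sum_comp fun i => m i).symm
    _ = ∑ x : (Fin k → Bool) × Bool, ctoDegree x := Fintype.sum_congr _ _ hm
    _ = 2 ^ (k + 1) * (2 ^ (k + 1) + k) := sum_ctoDegree k

theorem degree_le {i : ℕ} (hi : i < 2 ^ (k + 1)) : m i ≤ 2 * k + 4 * i := by
  obtain ⟨x, hx⟩ := (doubleEnumeration φ).surjective ⟨i, by rwa [← pow_succ']⟩
  have index_eq : (doubleEnumeration φ x : ℕ) = i := congrArg Fin.val hx
  rw [← index_eq, hm]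
  exact ctoDegree_le_doubleEnumeration φ x

theorem sum_range_degrees_le {p : ℕ} (hp : p < 2 ^ (k + 1)) :
    ∑ i ∈ Finset.range (p + 1), m i ≤ 2 * (p + 1) * (k + p) := by
  calc ∑ i ∈ Finset.range (p + 1), m i
      ≤ ∑ i ∈ Finset.range (p + 1), (2 * k + 2 * 2 * i) :=
        Finset.sum_le_sum fun i hi =>
          degree_le φ hm ((Finset.mem_range_succ_iff.1 hi).trans_lt hp)
    _ = (p + 1) * (2 * k + 2 * p) := sum_range_succ_two_mul_add_two_mul k 2 p
    _ = 2 * (p + 1) * (k + p) := by ring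

end Enumeration

theorem sum_of_degrees_in_CTO_construction_general
    (n : ℕ) (hn : 1 ≤ n)
    (φ : (Fin (n - 1) → Bool) ≃ Fin (2 ^ (n - 1)))
    (m : ℕ → ℕ)
    (hm : ∀ (ε : Fin (n - 1) → Bool) (b : Bool),
      m ((φ ε : ℕ) + 2 ^ (n - 1) * (if b then 1 else 0)) =
        2 * boolWeight ε + 2 ^ (n + 1) * (if b then 1 else 0)) :
    (∑ i ∈ Finset.range (2 ^ n), m i = 2 ^ n * (2 ^ n + n - 1)) ∧
    (∀ r : ℕ, r = 2 ^ n - 2 → ∑ i ∈ Finset.range (r + 2), m i = (r + 2) * (n + r + 1)) ∧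
    (∀ r : ℕ, r + 1 < 2 ^ n → ∑ i ∈ Finset.range (r + 2), m i ≤ 2 * (r + 2) * (n + r)) := by
  obtain ⟨k, rfl⟩ := Nat.exists_eq_add_of_le' hn
  have degree_eq : ∀ x, m (doubleEnumeration φ x) = ctoDegree x := fun x => by
    rw [val_doubleEnumeration]
    exact hm x.1 x.2
  have sum_eq := sum_range_degrees (k := k) φ degree_eq
  refine ⟨sum_eq, fun r hr => ?_, fun r hr => ?_⟩
  · have hr' : r + 2 = 2 ^ (k + 1) := by
      have : 2 ≤ 2 ^ (k + 1) := Nat.le_self_pow k.succ_ne_zero 2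
      omega
    rw [hr', sum_eq, ← hr']
    ring
  · calc ∑ i ∈ Finset.range (r + 2), m i ≤ 2 * (r + 2) * (k + (r + 1)) :=
          sum_range_degrees_le φ degree_eq hr
      _ = 2 * (r + 2) * (k + 1 + r) := by ring

/-- Lemma on the degrees `m_i` of the polynomials `c_i` in the CTO-type construction:
for `ε = (ε₁,…,εₙ) ∈ {0,1}ⁿ` one sets `m_ε = 2(ε₁ + ⋯ + ε_{n-1}) + 2^{n+1} εₙ`, and the `m_i`
(`0 ≤ i ≤ 2ⁿ - 1`) are obtained via a bijection `φ' : {0,1}^{n-1} ≃ {0,…,2^{n-1}-1}`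
which is monotone with respect to the number of nonzero entries, through
`i = φ'(ε₁,…,ε_{n-1}) + 2^{n-1} εₙ`.  Then:
(a) `∑_{i=0}^{2ⁿ-1} m_i = 2ⁿ (2ⁿ + n - 1)`; in particular for `r = 2ⁿ - 2` one has
`∑_{i=0}^{r+1} m_i = (r+2)(n+r+1)`; and
(b) for every `r` with `2^{n-1} ≤ r+1 < 2ⁿ`, `∑_{i=0}^{r+1} m_i ≤ 2(r+2)(n+r)`. -/
theorem sum_of_degrees_in_CTO_construction
    (n : ℕ) (hn : 2 ≤ n)
    (φ : (Fin (n-1) → Bool) ≃ Fin (2^(n-1)))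
    (hφ : ∀ ε δ : Fin (n-1) → Bool, boolWeight ε < boolWeight δ → φ ε < φ δ)
    (m : ℕ → ℕ)
    (hm : ∀ (ε : Fin (n-1) → Bool) (b : Bool),
      m ((φ ε : ℕ) + 2^(n-1) * (if b then 1 else 0)) =
        2 * boolWeight ε + 2^(n+1) * (if b then 1 else 0)) :
    (∑ i ∈ Finset.range (2^n), m i = 2^n * (2^n + n - 1)) ∧
    (∀ r : ℕ, r = 2^n - 2 → ∑ i ∈ Finset.range (r+2), m i = (r+2) * (n+r+1)) ∧
    (∀ r : ℕ, 2^(n-1) ≤ r + 1 → r + 1 < 2^n →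
      ∑ i ∈ Finset.range (r+2), m i ≤ 2*(r+2)*(n+r)) :=
  have ⟨sum_eq, sum_eq', sum_le⟩ :=
    sum_of_degrees_in_CTO_construction_general n (one_le_two.trans hn) φ m hm
  ⟨sum_eq, sum_eq', fun r _ hr => sum_le r hr⟩
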